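/- Let ξ and η be jointly stationary and ergodic random measures on ℝ^d with 0 < λ_ξ = λ_η < ∞, such that both ξ and η are diffuse, and suppose there exists an auxiliary simple point process χ (a non-zero simple point process jointly stationary and ergodic with ξ and η, with finite intensity λ_χ). Then there exists an allocation τ balancing ξ and η. -/

import Mathlib

/-!
The two random measures are matched locally, in countably many stages, using the points of `χ` as
landmarks; a balance of expected masses shows that nothing is left over.

*Covariant versions.* `ξ`, `η` and `χ` are flow-invariant only up to null sets depending on the
shift. `exists_covariant_version` replaces them by almost surely equal kernels that are covariant
for every `ω` and every shift. Covariant subsets of space can then be encoded by subsets `D` of `Ω`,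
through `{z | θ z ω ∈ D}`, and covariant displacements by maps `t : Ω → ℝ^d`, through
`z ↦ z + t (θ z ω)`. Any pair `D`, `t` gives an allocation: send `z` to `z + t (θ z ω)` if
`θ z ω ∈ D`, and to `∞` otherwise.

*Matching at one landmark.* Two finite diffuse measures depending measurably on a parameter are
matched, up to the smaller of the two masses, by a jointly measurable map
(`exists_partial_matching`): the distribution function of a diffuse measure makes it uniform, and
every probability kernel is a measurable image of the uniform law.

*Stages.* For bounded windows `U` and `V`, a site `z` is attached to the point `x` of `χ` if `x` is
the only point of `χ` in `z + U` (for the sites of `ξ`), respectively in `z + V` (for the sites of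
`η`). `exists_stage` matches, at each `x`, the parts of `ξ` and `η` attached to `x`. Running through
all pairs of windows from a countable base, each time with the parts of `ξ` and `η` that remain,
pathwise exhausts at least one of the two measures (`exists_matching`): if both had some mass left,
then at a fixed point `x` of `χ` some pair of windows would attach positive remaining mass of both
kinds to `x`, which the corresponding stage excludes.

*Conclusion.* Exhaustion of `ξ`, and of `η`, are invariant events whose union has full probability,
so by ergodicity one of them is almost sure. By the mass transport principle (`mass_transport`) the
matched parts of `ξ` and `η` have equal intensity, and since `λ_ξ = λ_η < ∞` so do the remaining
parts. Hence both remaining parts have intensity zero and vanish almost surely.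
-/

open MeasureTheory ENNReal

noncomputable section

/-- Measurable structure on `Option α`; the point `∞` is modeled by `none`. -/
instance {α : Type*} [MeasurableSpace α] : MeasurableSpace (Option α) :=
  MeasurableSpace.map some inferInstance

namespace Paper

variable {Ω : Type*} [MeasurableSpace Ω]
variable {G : Type*} [MeasurableSpace G] [TopologicalSpace G] [AddCommGroup G]

/-- A measurable flow `(θ_x)_{x ∈ G}` on `Ω`. -/
structure IsMeasurableFlow (θ : G → Ω → Ω) : Prop where
  measurable : Measurable fun p : G × Ω => θ p.1 p.2
  id_eq : θ 0 = id
  comp : ∀ x y : G, θ x ∘ θ y = θ (x + y)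

/-- `P` is stationary under the flow `θ`. -/
def IsStationary (P : Measure Ω) (θ : G → Ω → Ω) : Prop :=
  ∀ x : G, P.map (θ x) = P

/-- `P` is ergodic under the flow `θ`: invariant events are trivial. -/
def IsErgodicFlow (P : Measure Ω) (θ : G → Ω → Ω) : Prop :=
  ∀ A : Set Ω, MeasurableSet A → (∀ x : G, θ x ⁻¹' A = A) → P A = 0 ∨ P A = 1

/-- A random measure: a measurable kernel which is a.s. locally finite
(finite on compact sets). -/
def IsRandomMeasure (P : Measure Ω) (ξ : Ω → Measure G) : Prop :=
  (∀ s : Set G, MeasurableSet s → Measurable fun ω => ξ ω s) ∧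
    ∀ᵐ ω ∂P, ∀ K : Set G, IsCompact K → ξ ω K < ∞

/-- Flow-invariance (`joint stationarity`) of a random measure:
`ξ(θ_x ω, C − x) = ξ(ω, C)`. -/
def IsFlowInvariant (P : Measure Ω) (θ : G → Ω → Ω) (ξ : Ω → Measure G) : Prop :=
  ∀ x : G, ∀ᵐ ω ∂P, ξ (θ x ω) = (ξ ω).map (fun y => y - x)

/-- A diffuse (non-atomic) random measure. -/
def IsDiffuseRM (P : Measure Ω) (ξ : Ω → Measure G) : Prop :=
  ∀ᵐ ω ∂P, ∀ x : G, ξ ω {x} = 0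

/-- A discrete (purely atomic) random measure: a.s. carried by a countable set. -/
def IsDiscreteRM (P : Measure Ω) (ξ : Ω → Measure G) : Prop :=
  ∀ᵐ ω ∂P, ∃ s : Set G, s.Countable ∧ ξ ω sᶜ = 0

/-- A locally finite set of points. -/
def LocallyFiniteSet (s : Set G) : Prop :=
  ∀ x : G, ∃ U ∈ nhds x, (s ∩ U).Finite

/-- A simple point process: a.s. the counting measure of a locally finite set. -/
def IsSimplePointProcess (P : Measure Ω) (χ : Ω → Measure G) : Prop :=
  ∀ᵐ ω ∂P, ∃ s : Set G, LocallyFiniteSet s ∧ χ ω = Measure.count.restrict s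

/-- An allocation: a jointly measurable, translation-equivariant map
`Ω × G → G ∪ {∞}`, where `∞` is modeled by `none`. -/
def IsAllocation (P : Measure Ω) (θ : G → Ω → Ω) (τ : Ω → G → Option G) : Prop :=
  Measurable (fun p : Ω × G => τ p.1 p.2) ∧
    ∀ᵐ ω ∂P, ∀ x y : G, τ (θ y ω) (x - y) = Option.map (fun z => z - y) (τ ω x)

/-- `τ` balances `ξ` and `η`: a.s. no `ξ`-mass is sent to `∞` and the image of
`ξ(ω)` under `τ(ω, ·)` is `η(ω)`. -/
def Balances (P : Measure Ω) (ξ η : Ω → Measure G) (τ : Ω → G → Option G) : Prop :=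
  ∀ᵐ ω ∂P, ξ ω {z | τ ω z = none} = 0 ∧
    ∀ C : Set G, MeasurableSet C → ξ ω {z | ∃ y ∈ C, τ ω z = some y} = η ω C

/-- Euclidean space `ℝ^d`. -/
abbrev Rd (d : ℕ) := EuclideanSpace ℝ (Fin d)

/-- The unit cube `[0,1]^d`. -/
def unitCube (d : ℕ) : Set (Rd d) := {x | ∀ i, x i ∈ Set.Icc (0 : ℝ) 1}

/-- The intensity `λ_ξ = E ξ([0,1]^d)` of a random measure on `ℝ^d`. -/
def intensity {d : ℕ} (P : Measure Ω) (ξ : Ω → Measure (Rd d)) : ℝ≥0∞ :=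
  ∫⁻ ω, ξ ω (unitCube d) ∂P

/-! ### Measurable matching of diffuse kernels -/

section Matching

open ProbabilityTheory Filter

/-- A finite diffuse measure is made uniform on `[0, μ univ]` by its distribution function. -/
lemma measure_cdf_lt (μ : Measure ℝ) [IsFiniteMeasure μ] (hμ : ∀ x, μ {x} = 0) (t : ℝ≥0∞) :
    μ {x | μ (Set.Iic x) < t} = min t (μ Set.univ) := by
  have hcont : Continuous fun x => μ (Set.Iic x) := by
    refine continuous_iff_continuousAt.2 fun x => ?_
    refine tendsto_measure_of_ae_tendsto_indicator_of_isFiniteMeasure _ measurableSet_Iic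
      (fun _ => measurableSet_Iic) ?_
    have hne : ∀ᵐ y ∂μ, y ≠ x := by
      rw [ae_iff]; simpa using hμ x
    filter_upwards [hne] with y hy
    rcases lt_or_gt_of_ne hy with h | h
    · filter_upwards [lt_mem_nhds h] with z hz
      simp [hz.le, h.le]
    · filter_upwards [gt_mem_nhds h] with z hz
      simp only [Set.mem_Iic]
      exact iff_of_false hz.not_ge h.not_ge
  have hbot : Tendsto (fun x => μ (Set.Iic x)) atBot (nhds 0) := by
    have := tendsto_measure_of_ae_tendsto_indicator_of_isFiniteMeasure (μ := μ) (A := ∅)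
      (As := fun x : ℝ => Set.Iic x) atBot MeasurableSet.empty (fun _ => measurableSet_Iic)
      (Eventually.of_forall fun y => by
        filter_upwards [eventually_lt_atBot y] with z hz
        simp [hz])
    simpa using this
  have htop := tendsto_measure_Iic_atTop μ
  have hivt : ∀ u, 0 < u → u < μ Set.univ → ∃ r, μ (Set.Iic r) = u := fun u h0 h1 =>
    mem_range_of_exists_le_of_exists_ge hcont
      ((hbot.eventually (gt_mem_nhds h0)).exists.imp fun _ h => le_of_lt h)
      ((htop.eventually (lt_mem_nhds h1)).exists.imp fun _ h => le_of_lt h)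
  apply le_antisymm
  · refine le_min ?_ (measure_mono (Set.subset_univ _))
    rcases eq_or_ne t 0 with rfl | h0
    · simp
    rcases le_or_gt (μ Set.univ) t with h | h
    · exact (measure_mono (Set.subset_univ _)).trans h
    obtain ⟨s, hs⟩ := hivt t (pos_iff_ne_zero.2 h0) h
    rw [← hs]
    refine measure_mono fun x hx => ?_
    by_contra hxs
    have : μ (Set.Iic s) ≤ μ (Set.Iic x) :=
      measure_mono (Set.Iic_subset_Iic.2 (not_le.1 hxs).le)
    exact absurd hx (not_lt.2 this)
  · refine le_of_forall_lt fun u hu => ?_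
    obtain ⟨v, huv, hv⟩ := exists_between hu
    obtain ⟨r, hr⟩ := hivt v (pos_of_gt huv) (hv.trans_le (min_le_right _ _))
    refine huv.trans_le ?_
    rw [← hr]
    refine measure_mono fun x hx => ?_
    have h1 : μ (Set.Iic x) ≤ μ (Set.Iic r) := measure_mono (Set.Iic_subset_Iic.2 hx)
    exact h1.trans_lt (hr ▸ hv.trans_le (min_le_left _ _))

variable {X Y : Type*} [MeasurableSpace X] [MeasurableSpace Y]

/-- Distribution function of a measure on a standard Borel space, which is linearly ordered
through the embedding `embeddingReal Y` into `ℝ`. -/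
def embCdf [StandardBorelSpace Y] (μ : Measure Y) (z : Y) : ℝ≥0∞ :=
  μ {w | embeddingReal Y w ≤ embeddingReal Y z}

lemma measure_embCdf_lt [StandardBorelSpace Y] (μ : Measure Y) [IsFiniteMeasure μ]
    (hμ : ∀ x, μ {x} = 0) (t : ℝ≥0∞) :
    μ {z | embCdf μ z < t} = min t (μ Set.univ) := by
  have he := measurableEmbedding_embeddingReal Y
  have h := measure_cdf_lt (μ.map (embeddingReal Y)) (fun x => by
    rw [he.map_apply]
    refine Set.Subsingleton.induction_on (p := fun s => μ s = 0)
      (s := embeddingReal Y ⁻¹' {x}) ?_ (by simp) hμ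
    intro a ha b hb
    exact he.injective (by rw [Set.mem_preimage, Set.mem_singleton_iff] at ha hb; rw [ha, hb])) t
  rw [he.map_apply, he.map_apply] at h
  simp only [he.map_apply] at h
  exact h

lemma measurable_embCdf [StandardBorelSpace Y] (μ : Kernel X Y) [IsSFiniteKernel μ] :
    Measurable fun p : X × Y => embCdf (μ p.1) p.2 := by
  have he := (measurableEmbedding_embeddingReal Y).measurable
  have hs : MeasurableSet {q : (X × Y) × Y | embeddingReal Y q.2 ≤ embeddingReal Y q.1.2} :=
    measurableSet_le (he.comp measurable_snd) (he.comp (measurable_snd.comp measurable_fst))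
  exact Kernel.measurable_kernel_prodMk_left (κ := Kernel.prodMkRight Y μ) hs

/-- The kernel `ω ↦ κ ω` restricted to the `ω`-section of a measurable set. -/
def restrK (κ : Kernel X Y) [IsSFiniteKernel κ] (A : Set (X × Y)) (hA : MeasurableSet A) :
    Kernel X Y where
  toFun x := (κ x).restrict (Prod.mk x ⁻¹' A)
  measurable' := by
    refine Measure.measurable_of_measurable_coe _ fun s hs => ?_
    have : Measurable fun x => κ x (Prod.mk x ⁻¹' (Prod.snd ⁻¹' s ∩ A)) :=
      Kernel.measurable_kernel_prodMk_left ((measurable_snd hs).inter hA)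
    convert this using 2 with x
    rw [Measure.restrict_apply hs]
    rfl

lemma restrK_apply (κ : Kernel X Y) [IsSFiniteKernel κ] (A : Set (X × Y)) (hA : MeasurableSet A)
    (x : X) : restrK κ A hA x = (κ x).restrict (Prod.mk x ⁻¹' A) := by
  unfold restrK
  rfl

/-- A kernel whose measures are finite, without a uniform bound, is s-finite: it is cut according
to the integer part of the total mass. -/
lemma isSFiniteKernel_of_finite (κ : Kernel X Y) (h : ∀ x, κ x Set.univ < ∞) :
    IsSFiniteKernel κ := by
  classical
  let f : X → ℕ := fun x => ⌊(κ x Set.univ).toReal⌋₊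
  have hf : Measurable f := Nat.measurable_floor.comp (κ.measurable_coe MeasurableSet.univ).ennreal_toReal
  have hs : ∀ n, MeasurableSet (f ⁻¹' {n}) := fun n => hf (measurableSet_singleton n)
  let κs : ℕ → Kernel X Y := fun n => Kernel.piecewise (hs n) κ 0
  have hfin : ∀ n, IsFiniteKernel (κs n) := fun n => by
    refine ⟨⟨(n + 1 : ℕ), by simp, fun x => ?_⟩⟩
    simp only [κs]
    rw [Kernel.piecewise_apply']
    split_ifs with hx
    · have h1 : (κ x Set.univ).toReal < n + 1 := by
        have := Nat.lt_floor_add_one (κ x Set.univ).toReal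
        have h2 : ⌊(κ x Set.univ).toReal⌋₊ = n := hx
        rwa [h2] at this
      rw [← ENNReal.ofReal_toReal (h x).ne, ← ENNReal.ofReal_natCast]
      exact ENNReal.ofReal_le_ofReal (by push_cast; exact h1.le)
    · simp
  have hsum : κ = Kernel.sum κs := by
    ext x s hs'
    rw [Kernel.sum_apply' _ _ hs', tsum_eq_single (f x)]
    · simp [κs, Kernel.piecewise_apply']
    · intro n hn
      simp only [κs]
      rw [Kernel.piecewise_apply', if_neg (show x ∉ f ⁻¹' {n} from fun hx => hn (Eq.symm hx))]
      simp
  rw [hsum]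
  exact Kernel.isSFiniteKernel_sum

/-- Two kernels with equal total masses, the first one diffuse, are matched by a jointly measurable
map: the distribution function of the first makes it uniform, and the second is the image of the
uniform law under a measurable map. Nothing is claimed at parameters where the source has atoms or
the masses differ. -/
lemma exists_map_of_mass_eq [StandardBorelSpace Y] [Nonempty Y] (μ ν : Kernel X Y)
    (hμ : ∀ x, μ x Set.univ < ∞) (hν : ∀ x, ν x Set.univ < ∞) :
    ∃ σ : X × Y → Y, Measurable σ ∧ ∀ x, (∀ y, μ x {y} = 0) → μ x Set.univ = ν x Set.univ →
      (μ x).map (fun y => σ (x, y)) = ν x := by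
  classical
  have := isSFiniteKernel_of_finite μ hμ
  have hz : MeasurableSet {x | ν x Set.univ = 0} :=
    ν.measurable_coe MeasurableSet.univ (measurableSet_singleton 0)
  obtain ⟨y₀⟩ := ‹Nonempty Y›
  let ν' : Kernel X Y :=
    { toFun := fun x => if ν x Set.univ = 0 then Measure.dirac y₀ else (ν x Set.univ)⁻¹ • ν x
      measurable' := by
        refine Measure.measurable_of_measurable_coe _ fun s hs => ?_
        have h1 : Measurable fun x => if ν x Set.univ = 0 then Measure.dirac y₀ s
            else (ν x Set.univ)⁻¹ * ν x s :=
          Measurable.ite hz measurable_const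
            ((ν.measurable_coe MeasurableSet.univ).inv.mul (ν.measurable_coe hs))
        convert h1 using 2 with x
        split_ifs <;> simp }
  have hν'app : ∀ x, ν' x =
      if ν x Set.univ = 0 then Measure.dirac y₀ else (ν x Set.univ)⁻¹ • ν x := fun x => rfl
  have : IsMarkovKernel ν' := ⟨fun x => ⟨by
    rw [hν'app]
    split_ifs with h
    · simp
    · simp [ENNReal.inv_mul_cancel h (hν x).ne]⟩⟩
  have : Nonempty Y := ⟨y₀⟩
  obtain ⟨f, hf, hfν⟩ := Kernel.exists_measurable_map_eq_unitInterval ν'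
  let F : X × Y → ℝ≥0∞ := fun p => embCdf (μ p.1) p.2
  have hF : Measurable F := measurable_embCdf μ
  let H : X × Y → unitInterval := fun p =>
    Set.projIcc 0 1 zero_le_one ((μ p.1 Set.univ)⁻¹ * F p).toReal
  have hH : Measurable H := continuous_projIcc.measurable.comp
    ((((μ.measurable_coe MeasurableSet.univ).comp measurable_fst).inv.mul hF).ennreal_toReal)
  refine ⟨fun p => f p.1 (H p), hf.comp (measurable_fst.prodMk hH), fun x hx hm => ?_⟩
  rcases eq_or_ne (μ x Set.univ) 0 with h0 | h0
  · have h1 : μ x = 0 := Measure.measure_univ_eq_zero.1 h0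
    have h2 : ν x = 0 := Measure.measure_univ_eq_zero.1 (hm ▸ h0)
    rw [h1, h2, Measure.map_zero]
  have : IsFiniteMeasure (μ x) := ⟨hμ x⟩
  have hHx : Measurable fun y => H (x, y) := hH.comp measurable_prodMk_left
  have key : (μ x).map (fun y => H (x, y)) = (μ x Set.univ) • volume := by
    have hfm : IsFiniteMeasure ((μ x).map (fun y => H (x, y))) := inferInstance
    refine Measure.ext_of_Ici _ _ fun t => ?_
    have hIio : (μ x) ((fun y => H (x, y)) ⁻¹' Set.Iio t) =
        (μ x Set.univ) * ENNReal.ofReal t := by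
      have hset : ((fun y => H (x, y)) ⁻¹' Set.Iio t) =
          {y | embCdf (μ x) y < μ x Set.univ * ENNReal.ofReal t} := by
        ext y
        have hle : (μ x Set.univ)⁻¹ * F (x, y) ≤ 1 := by
          rw [← ENNReal.inv_mul_cancel h0 (hμ x).ne]
          gcongr
          exact measure_mono (Set.subset_univ _)
        have hv : ((H (x, y) : unitInterval) : ℝ) = ((μ x Set.univ)⁻¹ * F (x, y)).toReal := by
          have h1 := ENNReal.toReal_mono ENNReal.one_ne_top hle
          simp only [H]
          rw [Set.projIcc_of_mem zero_le_one (x := ((μ x Set.univ)⁻¹ * F (x, y)).toReal)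
            ⟨ENNReal.toReal_nonneg, by simpa using h1⟩]
        rw [Set.mem_preimage, Set.mem_Iio, ← Subtype.coe_lt_coe, hv,
          ← ENNReal.lt_ofReal_iff_toReal_lt (ne_top_of_le_ne_top ENNReal.one_ne_top hle),
          Set.mem_ofPred_eq, mul_comm, ← div_eq_mul_inv,
          ENNReal.div_lt_iff (Or.inl h0) (Or.inl (hμ x).ne), mul_comm]
      rw [hset, measure_embCdf_lt _ hx, min_eq_left]
      calc μ x Set.univ * ENNReal.ofReal t ≤ μ x Set.univ * 1 := by
            gcongr
            exact ENNReal.ofReal_le_one.2 t.2.2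
        _ = _ := mul_one _
    rw [Measure.map_apply hHx measurableSet_Ici, ← Set.compl_Iio, Set.preimage_compl,
      measure_compl (hHx measurableSet_Iio) (measure_ne_top _ _), hIio, Set.compl_Iio,
      Measure.smul_apply, unitInterval.volume_Ici, smul_eq_mul,
      ENNReal.ofReal_sub _ t.2.1, ENNReal.mul_sub (fun _ _ => (hμ x).ne)]
    simp
  have hfx : Measurable (f x) := hf.comp measurable_prodMk_left
  calc (μ x).map (fun y => f x (H (x, y)))
      = ((μ x).map (fun y => H (x, y))).map (f x) := (Measure.map_map hfx hHx).symm
    _ = ν x := by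
      rw [key, Measure.map_smul, hfν, hν'app, if_neg (hm ▸ h0), smul_smul, hm,
        ENNReal.mul_inv_cancel (hm ▸ h0) (hν x).ne, one_smul]

/-- Maximal matching of two diffuse kernels: an initial piece of the larger measure, for the order
underlying `embCdf`, is matched with the whole of the smaller one. -/
lemma exists_partial_matching [StandardBorelSpace Y] [Nonempty Y] (μ ν : Kernel X Y)
    (hμ : ∀ x, μ x Set.univ < ∞) (hν : ∀ x, ν x Set.univ < ∞) :
    ∃ (D R : Set (X × Y)) (σ : X × Y → Y), MeasurableSet D ∧ MeasurableSet R ∧ Measurable σ ∧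
      ∀ x, (∀ y, μ x {y} = 0) → (∀ y, ν x {y} = 0) →
        (∀ C, MeasurableSet C → μ x {y | (x, y) ∈ D ∧ σ (x, y) ∈ C} =
          ν x {y | (x, y) ∈ R ∧ y ∈ C}) ∧
        (μ x {y | (x, y) ∉ D} = 0 ∨ ν x {y | (x, y) ∉ R} = 0) := by
  have := isSFiniteKernel_of_finite μ hμ
  have := isSFiniteKernel_of_finite ν hν
  let D : Set (X × Y) := {p | embCdf (μ p.1) p.2 < ν p.1 Set.univ}
  let R : Set (X × Y) := {p | embCdf (ν p.1) p.2 < μ p.1 Set.univ}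
  have hD : MeasurableSet D := measurableSet_lt (measurable_embCdf μ)
    ((ν.measurable_coe MeasurableSet.univ).comp measurable_fst)
  have hR : MeasurableSet R := measurableSet_lt (measurable_embCdf ν)
    ((μ.measurable_coe MeasurableSet.univ).comp measurable_fst)
  obtain ⟨σ, hσ, hσm⟩ := exists_map_of_mass_eq (restrK μ D hD) (restrK ν R hR)
    (fun x => (measure_mono (Set.subset_univ _)).trans_lt
      ((Measure.restrict_apply_univ _).trans_lt ((measure_mono (Set.subset_univ _)).trans_lt (hμ x))))
    (fun x => (measure_mono (Set.subset_univ _)).trans_lt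
      ((Measure.restrict_apply_univ _).trans_lt ((measure_mono (Set.subset_univ _)).trans_lt (hν x))))
  refine ⟨D, R, σ, hD, hR, hσ, fun x h1 h2 => ?_⟩
  have : IsFiniteMeasure (μ x) := ⟨hμ x⟩
  have : IsFiniteMeasure (ν x) := ⟨hν x⟩
  have hDx : MeasurableSet (Prod.mk x ⁻¹' D) := measurable_prodMk_left hD
  have hRx : MeasurableSet (Prod.mk x ⁻¹' R) := measurable_prodMk_left hR
  have mD : μ x (Prod.mk x ⁻¹' D) = min (ν x Set.univ) (μ x Set.univ) :=
    measure_embCdf_lt (μ x) h1 (ν x Set.univ)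
  have mR : ν x (Prod.mk x ⁻¹' R) = min (μ x Set.univ) (ν x Set.univ) :=
    measure_embCdf_lt (ν x) h2 (μ x Set.univ)
  constructor
  · intro C hC
    have h := hσm x (fun y => Measure.absolutelyContinuous_of_le Measure.restrict_le_self (h1 y))
      (by rw [restrK_apply, restrK_apply, Measure.restrict_apply_univ, Measure.restrict_apply_univ,
        mD, mR, min_comm])
    have hσx : Measurable fun y => σ (x, y) := hσ.comp measurable_prodMk_left
    have h' := congrArg (fun m => m C) h
    simp only [restrK_apply] at h'
    rw [Measure.map_apply hσx hC, Measure.restrict_apply (hσx hC),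
      Measure.restrict_apply hC, Set.inter_comm, Set.inter_comm C] at h'
    exact h'
  · rcases le_total (μ x Set.univ) (ν x Set.univ) with h | h
    · left
      rw [min_eq_right h] at mD
      change μ x (Prod.mk x ⁻¹' D)ᶜ = 0
      rw [measure_compl hDx (measure_ne_top _ _), mD, tsub_self]
    · right
      rw [min_eq_right h] at mR
      change ν x (Prod.mk x ⁻¹' R)ᶜ = 0
      rw [measure_compl hRx (measure_ne_top _ _), mR, tsub_self]

end Matching

/-! ### Covariant versions of flow-invariant random measures -/

section Regularization

open ProbabilityTheory Filter

variable {d : ℕ}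

lemma isSFiniteKernel_of_ball {X : Type*} [MeasurableSpace X] (κ : Kernel X (Rd d))
    (h : ∀ x (n : ℕ), κ x (Metric.ball 0 n) < ∞) : IsSFiniteKernel κ := by
  let B : ℕ → Set (Rd d) := fun n => Metric.ball 0 n
  have hB : ∀ n, MeasurableSet (disjointed B n) :=
    MeasurableSet.disjointed fun n => Metric.isOpen_ball.measurableSet
  have hU : ⋃ n, disjointed B n = Set.univ := by
    rw [iUnion_disjointed]
    exact Metric.iUnion_ball_nat 0
  have hsum : κ = Kernel.sum fun n => κ.restrict (hB n) := by
    ext x s hs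
    rw [Kernel.sum_apply' _ _ hs]
    simp_rw [Kernel.restrict_apply' _ (hB _) _ hs]
    rw [← measure_iUnion, ← Set.inter_iUnion, hU, Set.inter_univ]
    · intro i j hij
      exact ((disjoint_disjointed B) hij).mono Set.inter_subset_right Set.inter_subset_right
    · exact fun n => hs.inter (hB n)
  rw [hsum]
  have : ∀ n, IsSFiniteKernel (κ.restrict (hB n)) := fun n => by
    refine isSFiniteKernel_of_finite _ fun x => ?_
    rw [Kernel.restrict_apply, Measure.restrict_apply_univ]
    exact (measure_mono (disjointed_subset B n)).trans_lt (h x n)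
  exact Kernel.isSFiniteKernel_sum

/-- A countable π-system that determines locally finite measures: bounded pieces of the half-lines
coming from the embedding of `ℝ^d` into `ℝ` as a standard Borel space. -/
def testSet (n : ℕ) (q : ℚ) : Set (Rd d) :=
  Metric.ball 0 n ∩ embeddingReal (Rd d) ⁻¹' Set.Iic (q : ℝ)

lemma measurableSet_testSet (n : ℕ) (q : ℚ) : MeasurableSet (testSet (d := d) n q) :=
  Metric.isOpen_ball.measurableSet.inter
    ((measurableEmbedding_embeddingReal (Rd d)).measurable measurableSet_Iic)

lemma ext_testSet (m m' : Measure (Rd d)) (hm : ∀ n : ℕ, m (Metric.ball 0 n) < ∞)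
    (h : ∀ n q, m (testSet n q) = m' (testSet n q)) : m = m' := by
  have he := measurableEmbedding_embeddingReal (Rd d)
  refine Measure.ext_of_generateFrom_of_iUnion
    (Set.range fun p : ℕ × ℚ => testSet (d := d) p.1 p.2) (fun n => testSet n n) ?_ ?_ ?_ ?_ ?_ ?_
  · apply le_antisymm
    · have hR : (inferInstance : MeasurableSpace ℝ) =
          MeasurableSpace.generateFrom (⋃ a : ℚ, {Set.Iic (a : ℝ)}) :=
        BorelSpace.measurable_eq.trans Real.borel_eq_generateFrom_Iic_rat
      refine (he.comap_eq.symm.trans ((congrArg (MeasurableSpace.comap _) hR).trans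
        MeasurableSpace.comap_generateFrom)).le.trans ?_
      refine MeasurableSpace.generateFrom_le ?_
      rintro _ ⟨s, hs, rfl⟩
      obtain ⟨q, rfl⟩ := Set.mem_iUnion.1 hs
      have : embeddingReal (Rd d) ⁻¹' Set.Iic (q : ℝ) = ⋃ n : ℕ, testSet n q := by
        simp only [testSet]
        rw [← Set.iUnion_inter, Metric.iUnion_ball_nat, Set.univ_inter]
      rw [this]
      exact MeasurableSet.iUnion fun n =>
        MeasurableSpace.measurableSet_generateFrom ⟨(n, q), rfl⟩
    · refine MeasurableSpace.generateFrom_le ?_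
      rintro _ ⟨p, rfl⟩
      exact measurableSet_testSet _ _
  · rintro _ ⟨⟨n, q⟩, rfl⟩ _ ⟨⟨n', q'⟩, rfl⟩ -
    refine ⟨(min n n', min q q'), ?_⟩
    ext x
    simp only [testSet, Set.mem_inter_iff, Metric.mem_ball, Set.mem_preimage, Set.mem_Iic,
      Nat.cast_min, Rat.cast_min, lt_min_iff, le_min_iff]
    tauto
  · refine Set.eq_univ_of_forall fun x => ?_
    obtain ⟨n, hn⟩ := exists_nat_gt (max (dist x 0) (embeddingReal (Rd d) x))
    refine Set.mem_iUnion.2 ⟨n, ?_, ?_⟩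
    · exact (le_max_left _ _).trans_lt hn
    · simpa using ((le_max_right _ _).trans_lt hn).le
  · exact fun n => ⟨(n, n), rfl⟩
  · exact fun n => ((measure_mono Set.inter_subset_left).trans_lt (hm n)).ne
  · rintro _ ⟨p, rfl⟩
    exact h _ _

/-- A flow-invariant random measure agrees almost surely with a locally finite kernel that is
covariant for every `ω` and every shift. Its value at `ω` is the common value, for Lebesgue-almost
every `x`, of `ξ (θ x ω)` translated back by `x`; the configurations `ω` at which there is no such
common value form a null set invariant under the flow, where the version is `0`. -/
lemma exists_covariant_version {Ω : Type*} [MeasurableSpace Ω] (P : Measure Ω)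
    [IsProbabilityMeasure P] (θ : Rd d → Ω → Ω) (hflow : IsMeasurableFlow θ)
    (hstat : IsStationary P θ) (ξ : Ω → Measure (Rd d)) (hξ : IsRandomMeasure P ξ)
    (hinv : IsFlowInvariant P θ ξ) :
    ∃ κ : Kernel Ω (Rd d), (∀ ω (n : ℕ), κ ω (Metric.ball 0 n) < ∞) ∧
      (∀ x ω, κ (θ x ω) = (κ ω).map (fun y => y - x)) ∧ ∀ᵐ ω ∂P, κ ω = ξ ω := by
  classical
  let ξ₀ : Kernel Ω (Rd d) := ⟨ξ, Measure.measurable_of_measurable_coe _ hξ.1⟩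
  have hG : MeasurableSet {ω | ∀ n : ℕ, ξ ω (Metric.ball 0 n) < ∞} := by
    rw [Set.ofPred_forall]
    exact MeasurableSet.iInter fun n =>
      measurableSet_lt (hξ.1 _ Metric.isOpen_ball.measurableSet) measurable_const
  let ξ₁ : Kernel Ω (Rd d) := Kernel.piecewise hG ξ₀ 0
  have hξ₁fin : ∀ ω (n : ℕ), ξ₁ ω (Metric.ball 0 n) < ∞ := fun ω n => by
    simp only [ξ₁]
    rw [Kernel.piecewise_apply']
    split_ifs with h
    · exact h n
    · simp
  have hξ₁sf : IsSFiniteKernel ξ₁ := isSFiniteKernel_of_ball _ hξ₁fin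
  have hξ₁ae : ∀ᵐ ω ∂P, ξ₁ ω = ξ ω := by
    filter_upwards [hξ.2] with ω hω
    have : ω ∈ {ω | ∀ n : ℕ, ξ ω (Metric.ball 0 n) < ∞} := fun n =>
      (measure_mono Metric.ball_subset_closedBall).trans_lt (hω _ (isCompact_closedBall 0 _))
    simp only [ξ₁]
    rw [Kernel.piecewise_apply, if_pos this]
    rfl
  have hθ : ∀ x, Measurable (θ x) := fun x => hflow.measurable.comp measurable_prodMk_left
  have hmp : ∀ x, MeasurePreserving (θ x) P P := fun x => ⟨hθ x, hstat x⟩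
  have hξ₁inv : ∀ x, ∀ᵐ ω ∂P, ξ₁ (θ x ω) = (ξ₁ ω).map (fun y => y - x) := fun x => by
    filter_upwards [hinv x, hξ₁ae, (hmp x).quasiMeasurePreserving.ae hξ₁ae] with ω h1 h2 h3
    rw [h3, h1, h2]
  -- `T (x, ω)` is `ξ₁ (θ x ω)` translated back by `x`.
  let T : Rd d × Ω → Measure (Rd d) := fun p => (ξ₁ (θ p.1 p.2)).map (fun y => y + p.1)
  have hTapp : ∀ p C, MeasurableSet C → T p C = ξ₁ (θ p.1 p.2) {y | y + p.1 ∈ C} :=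
    fun p C hC => Measure.map_apply (measurable_add_const _) hC
  have hTmeas : ∀ C, MeasurableSet C → Measurable fun p => T p C := fun C hC => by
    have hs : MeasurableSet {q : (Rd d × Ω) × Rd d | q.2 + q.1.1 ∈ C} :=
      (measurable_snd.add (measurable_fst.comp measurable_fst)) hC
    have := Kernel.measurable_kernel_prodMk_left
      (κ := Kernel.comap ξ₁ (fun p : Rd d × Ω => θ p.1 p.2) hflow.measurable) hs
    simp_rw [hTapp _ C hC]
    exact this
  have hTfin : ∀ p (n : ℕ), T p (Metric.ball 0 n) < ∞ := fun p n => by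
    rw [hTapp _ _ Metric.isOpen_ball.measurableSet]
    obtain ⟨m, hm⟩ := exists_nat_gt ((n : ℝ) + ‖p.1‖)
    refine (measure_mono fun y hy => ?_).trans_lt (hξ₁fin _ m)
    have h1 : ‖y + p.1‖ < n := by simpa using hy
    have h2 : ‖y‖ ≤ ‖y + p.1‖ + ‖p.1‖ := by simpa using norm_sub_le (y + p.1) p.1
    simp only [Metric.mem_ball, dist_zero_right]
    linarith
  let γ : Measure (Rd d) := (volume : Measure (Rd d)).toFinite
  have hγ : ∀ {p : Rd d → Prop}, (∀ᵐ x, p x) → ∀ᵐ x ∂γ, p x := fun h => by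
    rwa [ae_toFinite]
  let Q : Ω → Measure (Rd d) → Prop := fun ω m => ∀ᵐ x, T (x, ω) = m
  have hQu : ∀ ω m m', Q ω m → Q ω m' → m = m' := fun ω m m' h h' => by
    obtain ⟨x, hx, hx'⟩ := (h.and h').exists
    exact hx.symm.trans hx'
  have hQint : ∀ ω m, Q ω m → ∀ C, ∫⁻ x, T (x, ω) C ∂γ = m C := fun ω m h C => by
    have : ∀ᵐ x ∂γ, T (x, ω) C = m C := (hγ h).mono fun x hx => by rw [hx]
    rw [lintegral_congr_ae this]
    simp
  have hAeq : {ω | ∃ m, Q ω m} = ⋂ (n : ℕ) (q : ℚ),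
      {ω | ∀ᵐ x, T (x, ω) (testSet n q) = ∫⁻ x, T (x, ω) (testSet n q) ∂γ} := by
    ext ω
    simp only [Set.mem_iInter, Set.mem_ofPred_eq]
    constructor
    · rintro ⟨m, hm⟩ n q
      rw [hQint ω m hm]
      exact hm.mono fun x hx => by rw [hx]
    · intro h
      have h' : ∀ᵐ x, ∀ n q, T (x, ω) (testSet n q) = ∫⁻ x, T (x, ω) (testSet n q) ∂γ :=
        ae_all_iff.2 fun n => ae_all_iff.2 fun q => h n q
      obtain ⟨x₀, hx₀⟩ := h'.exists
      refine ⟨T (x₀, ω), h'.mono fun x hx => ?_⟩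
      exact ext_testSet _ _ (hTfin _) fun n q => by rw [hx, hx₀]
  have hgmeas : ∀ C, MeasurableSet C → Measurable fun ω => ∫⁻ x, T (x, ω) C ∂γ :=
    fun C hC => (hTmeas C hC).lintegral_prod_left'
  have hA : MeasurableSet {ω | ∃ m, Q ω m} := by
    rw [hAeq]
    refine MeasurableSet.iInter fun n => MeasurableSet.iInter fun q => ?_
    have hC := measurableSet_testSet (d := d) n q
    have hs : MeasurableSet {p : Ω × Rd d |
        T (p.2, p.1) (testSet n q) = ∫⁻ x, T (x, p.1) (testSet n q) ∂γ} :=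
      measurableSet_eq_fun ((hTmeas _ hC).comp measurable_swap) ((hgmeas _ hC).comp measurable_fst)
    have := measurable_measure_prodMk_left (ν := (volume : Measure (Rd d))) hs.compl
    exact this (measurableSet_singleton 0)
  let κ₀ : Ω → Measure (Rd d) := fun ω => if h : ∃ m, Q ω m then h.choose else 0
  have hκ₀ : ∀ ω m, Q ω m → κ₀ ω = m := fun ω m h => by
    have h' : ∃ m, Q ω m := ⟨m, h⟩
    simp only [κ₀]
    rw [dif_pos h']
    exact hQu ω _ _ h'.choose_spec h
  have hκ₀' : ∀ ω, (¬ ∃ m, Q ω m) → κ₀ ω = 0 := fun ω h => dif_neg h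
  have hκ₀meas : Measurable κ₀ := by
    refine Measure.measurable_of_measurable_coe _ fun C hC => ?_
    have : (fun ω => κ₀ ω C) =
        fun ω => if ω ∈ {ω | ∃ m, Q ω m} then ∫⁻ x, T (x, ω) C ∂γ else 0 := by
      ext ω
      split_ifs with h
      · obtain ⟨m, hm⟩ := h
        rw [hκ₀ ω m hm, hQint ω m hm]
      · rw [hκ₀' ω h]; simp
    rw [this]
    exact Measurable.ite hA (hgmeas C hC) measurable_const
  have hshift : ∀ ω y m, Q ω m → Q (θ y ω) (m.map fun z => z - y) := fun ω y m h => by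
    have h1 : ∀ᵐ x, T (x + y, ω) = m :=
      (measurePreserving_add_right volume y).quasiMeasurePreserving.ae h
    filter_upwards [h1] with x hx
    rw [← hx]
    simp only [T]
    rw [Measure.map_map (measurable_sub_const _) (measurable_add_const _)]
    have h2 : θ x (θ y ω) = θ (x + y) ω := congrFun (hflow.comp x y) ω
    rw [h2]
    congr 1
    ext1 z
    simp [← add_assoc]
  refine ⟨⟨κ₀, hκ₀meas⟩, fun ω n => ?_, fun y ω => ?_, ?_⟩
  · change κ₀ ω _ < ∞
    by_cases h : ∃ m, Q ω m
    · obtain ⟨m, hm⟩ := h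
      obtain ⟨x, hx⟩ := Eventually.exists hm
      rw [hκ₀ ω m hm, ← hx]
      exact hTfin _ n
    · rw [hκ₀' ω h]; simp
  · change κ₀ (θ y ω) = (κ₀ ω).map _
    by_cases h : ∃ m, Q ω m
    · obtain ⟨m, hm⟩ := h
      rw [hκ₀ ω m hm, hκ₀ _ _ (hshift ω y m hm)]
    · have h' : ¬ ∃ m, Q (θ y ω) m := by
        rintro ⟨m, hm⟩
        refine h ⟨m.map fun z => z - (-y), ?_⟩
        have := hshift (θ y ω) (-y) m hm
        have h2 : θ (-y) (θ y ω) = ω := by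
          have := congrFun (hflow.comp (-y) y) ω
          rw [neg_add_cancel, hflow.id_eq] at this
          exact this
        rwa [h2] at this
      rw [hκ₀' ω h, hκ₀' _ h', Measure.map_zero]
  · -- Fubini turns invariance for each fixed `x` into invariance for almost every `x`.
    have hsm : MeasurableSet {p : Ω × Rd d |
        ∀ n q, T (p.2, p.1) (testSet n q) = ξ₁ p.1 (testSet n q)} := by
      simp only [Set.ofPred_forall]
      refine MeasurableSet.iInter fun n => MeasurableSet.iInter fun q => ?_
      have hC := measurableSet_testSet (d := d) n q
      exact measurableSet_eq_fun ((hTmeas _ hC).comp measurable_swap)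
        ((ξ₁.measurable_coe hC).comp measurable_fst)
    have hswap : ∀ᵐ ω ∂P, ∀ᵐ x : Rd d,
        ∀ n q, T (x, ω) (testSet n q) = ξ₁ ω (testSet n q) := by
      rw [Measure.ae_ae_comm hsm]
      refine Eventually.of_forall fun x => ?_
      filter_upwards [hξ₁inv x] with ω hω n q
      simp only [T]
      rw [hω, Measure.map_map (measurable_add_const _) (measurable_sub_const _)]
      have : ((fun y => y + x) ∘ fun y => y - x) = (id : Rd d → Rd d) := by
        ext1 z; simp
      rw [this, Measure.map_id]
    filter_upwards [hswap, hξ₁ae] with ω h1 h2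
    rw [← h2]
    exact hκ₀ ω _ (h1.mono fun x hx => ext_testSet _ _ (hTfin _) hx)

end Regularization

/-! ### Matching the masses attached to the points of the point process -/

section Stage

open ProbabilityTheory Filter

variable {d : ℕ} {Ω : Type*} [MeasurableSpace Ω]

/-- A kernel that is finite on balls and covariant under the flow without exceptional sets. -/
structure IsCov (θ : Rd d → Ω → Ω) (κ : Kernel Ω (Rd d)) : Prop where
  fin : ∀ ω (n : ℕ), κ ω (Metric.ball 0 n) < ∞
  cov : ∀ x ω, κ (θ x ω) = (κ ω).map (fun y => y - x)

/-- The configurations to which the pathwise construction applies: `χ ω` is a counting measure,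
and `ξ ω`, `η ω` are diffuse. -/
def Good (ξ η χ : Kernel Ω (Rd d)) (ω : Ω) : Prop :=
  (∃ s, χ ω = Measure.count.restrict s) ∧ (∀ x, ξ ω {x} = 0) ∧ ∀ x, η ω {x} = 0

variable {θ : Rd d → Ω → Ω}

lemma IsCov.apply {κ : Kernel Ω (Rd d)} (h : IsCov θ κ) (x : Rd d) (ω : Ω) (C : Set (Rd d)) :
    κ (θ x ω) C = κ ω {y | y - x ∈ C} := by
  rw [h.cov x ω]
  exact MeasurableEquiv.map_apply (MeasurableEquiv.subRight x) C

lemma IsCov.apply_add {κ : Kernel Ω (Rd d)} (h : IsCov θ κ) (x : Rd d) (ω : Ω) (A : Set (Rd d)) :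
    κ ω A = κ (θ x ω) {y | y + x ∈ A} := by
  rw [h.apply]
  simp

lemma IsMeasurableFlow.apply_apply (hf : IsMeasurableFlow θ) (x y : Rd d) (ω : Ω) :
    θ x (θ y ω) = θ (x + y) ω := congrFun (hf.comp x y) ω

lemma IsMeasurableFlow.neg_apply (hf : IsMeasurableFlow θ) (x : Rd d) (ω : Ω) :
    θ (-x) (θ x ω) = ω := by
  rw [hf.apply_apply, neg_add_cancel, hf.id_eq]; rfl

lemma IsMeasurableFlow.measurable_left (hf : IsMeasurableFlow θ) (ω : Ω) :
    Measurable fun x => θ x ω := hf.measurable.comp measurable_prodMk_right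

lemma IsMeasurableFlow.measurable_right (hf : IsMeasurableFlow θ) (x : Rd d) :
    Measurable (θ x) := hf.measurable.comp measurable_prodMk_left

lemma IsCov.count_shift {χ : Kernel Ω (Rd d)} (h : IsCov θ χ) {ω : Ω} {s : Set (Rd d)}
    (hs : χ ω = Measure.count.restrict s) (z : Rd d) :
    χ (θ z ω) = Measure.count.restrict {y | y + z ∈ s} := by
  ext C hC
  have hC' : MeasurableSet {y | y - z ∈ C} := (measurable_sub_const z) hC
  rw [h.apply, hs, Measure.restrict_apply hC', Measure.restrict_apply hC,
    ← Measure.count_injective_image (add_left_injective z) (C ∩ _)]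
  congr 1
  ext y
  constructor
  · rintro ⟨h1, h2⟩
    exact ⟨y - z, ⟨h1, by simpa using h2⟩, by simp⟩
  · rintro ⟨w, ⟨h1, h2⟩, rfl⟩
    exact ⟨by simpa using h1, h2⟩

lemma Good.shift {ξ η χ : Kernel Ω (Rd d)} (hξ : IsCov θ ξ) (hη : IsCov θ η) (hχ : IsCov θ χ)
    {ω : Ω} (h : Good ξ η χ ω) (z : Rd d) : Good ξ η χ (θ z ω) := by
  obtain ⟨⟨s, hs⟩, h1, h2⟩ := h
  refine ⟨⟨_, hχ.count_shift hs z⟩, fun x => ?_, fun x => ?_⟩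
  · rw [hξ.apply]
    simpa [sub_eq_iff_eq_add] using h1 (x + z)
  · rw [hη.apply]
    simpa [sub_eq_iff_eq_add] using h2 (x + z)

lemma restrict_count_eq_one {s U : Set (Rd d)} (hU : MeasurableSet U)
    (h : Measure.count.restrict s U = 1) : ∃ x, U ∩ s = {x} := by
  rw [Measure.restrict_apply hU] at h
  have hf : (U ∩ s).Finite := Measure.count_apply_lt_top.1 (by rw [h]; simp)
  rw [Measure.count_apply_finite _ hf] at h
  have h1 : hf.toFinset.card = 1 := by exact_mod_cast h
  obtain ⟨x, hx⟩ := Finset.card_eq_one.1 h1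
  exact ⟨x, by rw [← hf.coe_toFinset, hx]; simp⟩

/-- The unique point of the configuration in `U`, when there is exactly one, is a measurable
function of `ω`: it is the integral of the identity over `U`. -/
lemma exists_center (χ : Kernel Ω (Rd d)) [IsSFiniteKernel χ] {U : Set (Rd d)}
    (hU : MeasurableSet U) :
    ∃ p : Ω → Rd d, Measurable p ∧ ∀ ω s, χ ω = Measure.count.restrict s →
      χ ω U = 1 → ∀ x ∈ s, x ∈ U → p ω = x := by
  refine ⟨fun ω => ∫ y, y ∂(χ.restrict hU ω), ?_, fun ω s hs h1 x hx hxU => ?_⟩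
  · have : StronglyMeasurable (Function.uncurry fun (_ : Ω) (y : Rd d) => y) :=
      measurable_snd.stronglyMeasurable
    exact (StronglyMeasurable.integral_kernel_prod_right this).measurable
  · rw [hs] at h1
    obtain ⟨x', hx'⟩ := restrict_count_eq_one hU h1
    have : x = x' := by
      have : x ∈ U ∩ s := ⟨hxU, hx⟩
      rwa [hx'] at this
    subst this
    change ∫ y, y ∂(χ.restrict hU ω) = x
    rw [Kernel.restrict_apply, hs, Measure.restrict_restrict hU, hx', Measure.restrict_singleton,
      Measure.count_singleton, one_smul, integral_dirac]

lemma IsCov.countable {χ : Kernel Ω (Rd d)} (h : IsCov θ χ) {ω : Ω} {s : Set (Rd d)}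
    (hs : χ ω = Measure.count.restrict s) : s.Countable := by
  have : s = ⋃ n : ℕ, (Metric.ball 0 n ∩ s) := by
    rw [← Set.iUnion_inter, Metric.iUnion_ball_nat, Set.univ_inter]
  rw [this]
  refine Set.countable_iUnion fun n => Set.Finite.countable ?_
  rw [← Measure.count_apply_lt_top, ← Measure.restrict_apply Metric.isOpen_ball.measurableSet, ← hs]
  exact h.fin ω n

/-- The sites at which the window `U` sees exactly one configuration point split into disjoint
cells according to that point. -/
lemma cell_sum {χ : Kernel Ω (Rd d)} (hχ : IsCov θ χ)
    (m : Measure (Rd d)) {U : Set (Rd d)} (hU : MeasurableSet U) {ω : Ω} {s : Set (Rd d)}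
    (hs : χ ω = Measure.count.restrict s) {A : Set (Rd d)} (hA : MeasurableSet A)
    (hAU : ∀ z ∈ A, χ (θ z ω) U = 1) :
    m A = ∑' x : s, m (A ∩ {z | (x : Rd d) - z ∈ U}) := by
  have : Countable s := (hχ.countable hs).to_subtype
  have hpt : ∀ z ∈ A, ∃ y, U ∩ {y | y + z ∈ s} = {y} := fun z hz => by
    refine restrict_count_eq_one hU ?_
    rw [← hχ.count_shift hs z]
    exact hAU z hz
  rw [← measure_iUnion]
  · congr 1
    ext z
    simp only [Set.mem_iUnion, Set.mem_inter_iff, Set.mem_ofPred_eq]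
    constructor
    · intro hz
      obtain ⟨y, hy⟩ := hpt z hz
      have hy' : y ∈ U ∩ {y | y + z ∈ s} := by rw [hy]; rfl
      exact ⟨⟨y + z, hy'.2⟩, hz, by simpa using hy'.1⟩
    · rintro ⟨_, hz, _⟩
      exact hz
  · intro x x' hne
    refine Set.disjoint_left.2 ?_
    rintro z ⟨hz, hzx⟩ ⟨_, hzx'⟩
    obtain ⟨y, hy⟩ := hpt z hz
    have h1 : (x : Rd d) - z ∈ U ∩ {y | y + z ∈ s} := ⟨hzx, by simp⟩
    have h2 : (x' : Rd d) - z ∈ U ∩ {y | y + z ∈ s} := ⟨hzx', by simp⟩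
    rw [hy] at h1 h2
    apply hne
    ext1
    exact sub_left_injective (h1.trans h2.symm)
  · exact fun x => hA.inter ((measurable_const_sub _) hU)

/-- One stage of the construction. The part `S` of `ξ` (resp. the part `T` of `η`) seeing exactly
one configuration point through the window `U` (resp. `V`) is attached to that point, and at every
configuration point the two attached measures are matched maximally. Flow-covariant subsets of
space are encoded by subsets of `Ω`, flow-covariant displacements by functions on `Ω`. -/
lemma exists_stage (hf : IsMeasurableFlow θ) {ξ η χ : Kernel Ω (Rd d)} (hξ : IsCov θ ξ)
    (hη : IsCov θ η) (hχ : IsCov θ χ) {S T : Set Ω} (hS : MeasurableSet S) (hT : MeasurableSet T)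
    {U V : Set (Rd d)} (hU : MeasurableSet U) (hV : MeasurableSet V)
    (hUb : ∃ n : ℕ, U ⊆ Metric.ball 0 n) (hVb : ∃ n : ℕ, V ⊆ Metric.ball 0 n) :
    ∃ (D R : Set Ω) (t : Ω → Rd d), MeasurableSet D ∧ MeasurableSet R ∧ Measurable t ∧
      D ⊆ S ∧ R ⊆ T ∧ ∀ ω, Good ξ η χ ω →
        (∀ C, MeasurableSet C → ξ ω {z | θ z ω ∈ D ∧ z + t (θ z ω) ∈ C} =
          η ω {w | θ w ω ∈ R ∧ w ∈ C}) ∧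
        ∀ x, χ ω {x} ≠ 0 →
          ξ ω {z | θ z ω ∈ S \ D ∧ χ (θ z ω) U = 1 ∧ x - z ∈ U} = 0 ∨
          η ω {w | θ w ω ∈ T \ R ∧ χ (θ w ω) V = 1 ∧ x - w ∈ V} = 0 := by
  have hsξ := isSFiniteKernel_of_ball ξ hξ.fin
  have hsη := isSFiniteKernel_of_ball η hη.fin
  have hsχ := isSFiniteKernel_of_ball χ hχ.fin
  obtain ⟨p, hp, hpc⟩ := exists_center χ hU
  obtain ⟨p', hp', hpc'⟩ := exists_center χ hV
  -- The cell, in the frame of the configuration point `0`.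
  let cell : Set Ω → Set (Rd d) → Set (Ω × Rd d) := fun S U =>
    {q | θ q.2 q.1 ∈ S ∧ χ (θ q.2 q.1) U = 1 ∧ -q.2 ∈ U}
  have hθs : Measurable fun q : Ω × Rd d => θ q.2 q.1 := hf.measurable.comp measurable_swap
  have hcell : ∀ S U, MeasurableSet S → MeasurableSet U → MeasurableSet (cell S U) :=
    fun S U hS hU => (hθs hS).inter
      ((((χ.measurable_coe hU).comp hθs) (measurableSet_singleton 1)).inter (measurable_snd.neg hU))
  have hfin : ∀ κ : Kernel Ω (Rd d), IsCov θ κ → ∀ S U, (∃ n : ℕ, U ⊆ Metric.ball 0 n) → ∀ ω,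
      κ ω (Prod.mk ω ⁻¹' cell S U) < ∞ := by
    rintro κ hκ S U ⟨n, hn⟩ ω
    refine (measure_mono fun y hy => ?_).trans_lt (hκ.fin ω n)
    simpa using hn hy.2.2
  obtain ⟨D₀, R₀, σ, hD₀, hR₀, hσ, hmatch⟩ := exists_partial_matching
    (restrK ξ (cell S U) (hcell S U hS hU)) (restrK η (cell T V) (hcell T V hT hV))
    (fun ω => by rw [restrK_apply, Measure.restrict_apply_univ]; exact hfin ξ hξ S U hUb ω)
    (fun ω => by rw [restrK_apply, Measure.restrict_apply_univ]; exact hfin η hη T V hVb ω)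
  have hloc : ∀ p : Ω → Rd d, Measurable p → Measurable fun ω => (θ (p ω) ω, -p ω) :=
    fun p hp => (hf.measurable.comp (hp.prodMk measurable_id)).prodMk hp.neg
  let D : Set Ω := {ω | ω ∈ S ∧ χ ω U = 1 ∧ (θ (p ω) ω, -p ω) ∈ D₀}
  let R : Set Ω := {ω | ω ∈ T ∧ χ ω V = 1 ∧ (θ (p' ω) ω, -p' ω) ∈ R₀}
  let t : Ω → Rd d := fun ω => σ (θ (p ω) ω, -p ω) + p ω
  have hD : MeasurableSet D := hS.inter
    (((χ.measurable_coe hU) (measurableSet_singleton 1)).inter (hloc p hp hD₀))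
  have hR : MeasurableSet R := hT.inter
    (((χ.measurable_coe hV) (measurableSet_singleton 1)).inter (hloc p' hp' hR₀))
  have ht : Measurable t := (hσ.comp (hloc p hp)).add hp
  -- Seen from the configuration point `x`, the located point is `x` itself.
  have hcenter : ∀ (U : Set (Rd d)) (p : Ω → Rd d), (∀ ω s, χ ω = Measure.count.restrict s →
      χ ω U = 1 → ∀ x ∈ s, x ∈ U → p ω = x) → ∀ ω s, χ ω = Measure.count.restrict s →
      ∀ x ∈ s, ∀ y, χ (θ y (θ x ω)) U = 1 → -y ∈ U → p (θ y (θ x ω)) = -y := by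
    intro U p h ω s hs x hx y h1 h2
    refine h _ _ (hχ.count_shift (hχ.count_shift hs x) y) h1 _ ?_ h2
    simpa using hx
  refine ⟨D, R, t, hD, hR, ht, fun ω h => h.1, fun ω h => h.1, fun ω hω => ?_⟩
  obtain ⟨⟨s, hs⟩, hdξ, hdη⟩ := id hω
  have hm : ∀ x, _ := fun x => hmatch (θ x ω)
    (fun y => Measure.absolutelyContinuous_of_le Measure.restrict_le_self
      ((hω.shift hξ hη hχ x).2.1 y))
    (fun y => Measure.absolutelyContinuous_of_le Measure.restrict_le_self
      ((hω.shift hξ hη hχ x).2.2 y))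
  have hDiff : ∀ x ∈ s, ∀ y, θ y (θ x ω) ∈ S → χ (θ y (θ x ω)) U = 1 → -y ∈ U →
      (θ y (θ x ω) ∈ D ↔ (θ x ω, y) ∈ D₀) ∧ t (θ y (θ x ω)) = σ (θ x ω, y) - y := by
    intro x hx y h1 h2 h3
    have h4 := hcenter U p hpc ω s hs x hx y h2 h3
    constructor
    · simp only [D, Set.mem_ofPred_eq, h4, hf.neg_apply, neg_neg]
      tauto
    · simp only [t, h4, hf.neg_apply, neg_neg, sub_eq_add_neg]
  have hRiff : ∀ x ∈ s, ∀ y, θ y (θ x ω) ∈ T → χ (θ y (θ x ω)) V = 1 → -y ∈ V →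
      (θ y (θ x ω) ∈ R ↔ (θ x ω, y) ∈ R₀) := by
    intro x hx y h1 h2 h3
    have h4 := hcenter V p' hpc' ω s hs x hx y h2 h3
    simp only [R, Set.mem_ofPred_eq, h4, hf.neg_apply, neg_neg]
    tauto
  constructor
  · intro C hC
    have hθω := hf.measurable_left ω
    have hA : MeasurableSet {z | θ z ω ∈ D ∧ z + t (θ z ω) ∈ C} :=
      (hθω hD).inter ((measurable_id.add (ht.comp hθω)) hC)
    have hB : MeasurableSet {w | θ w ω ∈ R ∧ w ∈ C} := (hθω hR).inter hC
    rw [cell_sum hχ (ξ ω) hU hs hA (fun z hz => hz.1.2.1),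
      cell_sum hχ (η ω) hV hs hB (fun z hz => hz.1.2.1)]
    congr 1
    ext1 ⟨x, hx⟩
    have hCx : MeasurableSet {y | y + x ∈ C} := (measurable_add_const x) hC
    have h1 := (hm x).1 _ hCx
    have hσx : Measurable fun y => σ (θ x ω, y) := hσ.comp measurable_prodMk_left
    have hDx : MeasurableSet {y | (θ x ω, y) ∈ D₀} := measurable_prodMk_left hD₀
    have hRx : MeasurableSet {y | (θ x ω, y) ∈ R₀} := measurable_prodMk_left hR₀
    have hDx' : MeasurableSet {y | (θ x ω, y) ∈ D₀ ∧ σ (θ x ω, y) ∈ {y | y + x ∈ C}} :=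
      hDx.inter (hσx hCx)
    have hRx' : MeasurableSet {y | (θ x ω, y) ∈ R₀ ∧ y ∈ {y | y + x ∈ C}} := hRx.inter hCx
    rw [restrK_apply, restrK_apply, Measure.restrict_apply hDx', Measure.restrict_apply hRx'] at h1
    rw [hξ.apply_add x, hη.apply_add x]
    convert h1 using 2
    · ext y
      simp only [Set.mem_inter_iff, Set.mem_ofPred_eq, ← hf.apply_apply, Set.mem_preimage, cell,
        sub_add_cancel_right]
      constructor
      · rintro ⟨⟨h1, h2⟩, h3⟩
        have := hDiff x hx y h1.1 h1.2.1 h3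
        refine ⟨⟨this.1.1 h1, ?_⟩, h1.1, h1.2.1, h3⟩
        rw [this.2] at h2
        convert h2 using 1
        abel
      · rintro ⟨⟨h1, h2⟩, h3, h4, h5⟩
        have := hDiff x hx y h3 h4 h5
        refine ⟨⟨this.1.2 h1, ?_⟩, h5⟩
        rw [this.2]
        convert h2 using 1
        abel
    · ext y
      simp only [Set.mem_inter_iff, Set.mem_ofPred_eq, ← hf.apply_apply, Set.mem_preimage, cell,
        sub_add_cancel_right]
      constructor
      · rintro ⟨⟨h1, h2⟩, h3⟩
        exact ⟨⟨(hRiff x hx y h1.1 h1.2.1 h3).1 h1, h2⟩, h1.1, h1.2.1, h3⟩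
      · rintro ⟨⟨h1, h2⟩, h3, h4, h5⟩
        exact ⟨⟨(hRiff x hx y h3 h4 h5).2 h1, h2⟩, h5⟩
  · intro x hχx
    have hx : x ∈ s := by
      by_contra h
      apply hχx
      rw [hs, Measure.restrict_apply (measurableSet_singleton x),
        Set.singleton_inter_eq_empty.2 h, measure_empty]
    have hDx : MeasurableSet {y | (θ x ω, y) ∉ D₀} := measurable_prodMk_left hD₀.compl
    have hRx : MeasurableSet {y | (θ x ω, y) ∉ R₀} := measurable_prodMk_left hR₀.compl
    refine (hm x).2.imp (fun h => ?_) (fun h => ?_)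
    · rw [restrK_apply, Measure.restrict_apply hDx] at h
      rw [hξ.apply_add x]
      refine measure_mono_null ?_ h
      rintro y ⟨h1, h2, h3⟩
      rw [← hf.apply_apply] at h1 h2
      rw [sub_add_cancel_right] at h3
      exact ⟨fun h4 => h1.2 ((hDiff x hx y h1.1 h2 h3).1.2 h4), h1.1, h2, h3⟩
    · rw [restrK_apply, Measure.restrict_apply hRx] at h
      rw [hη.apply_add x]
      refine measure_mono_null ?_ h
      rintro y ⟨h1, h2, h3⟩
      rw [← hf.apply_apply] at h1 h2
      rw [sub_add_cancel_right] at h3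
      exact ⟨fun h4 => h1.2 ((hRiff x hx y h1.1 h2 h3).2 h4), h1.1, h2, h3⟩

end Stage

/-! ### Exhaustion over all pairs of windows -/

section Gluing

open ProbabilityTheory Filter

variable {d : ℕ} {Ω : Type*} [MeasurableSpace Ω] {θ : Rd d → Ω → Ω}

/-- A countable base of small windows. -/
def window (d n : ℕ) : Set (Rd d) :=
  Metric.ball (TopologicalSpace.denseSeq (Rd d) n.unpair.1) (1 / ((n.unpair.2 : ℝ) + 1))

lemma measurableSet_window (n : ℕ) : MeasurableSet (window d n) := Metric.isOpen_ball.measurableSet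

lemma window_bounded (n : ℕ) : ∃ m : ℕ, window d n ⊆ Metric.ball 0 m := by
  obtain ⟨m, hm⟩ := exists_nat_gt
    (‖TopologicalSpace.denseSeq (Rd d) n.unpair.1‖ + 1 / ((n.unpair.2 : ℝ) + 1))
  refine ⟨m, Metric.ball_subset_ball' ?_⟩
  rw [dist_zero_right]
  linarith

lemma exists_window (a : Rd d) {ε : ℝ} (hε : 0 < ε) :
    ∃ n, a ∈ window d n ∧ window d n ⊆ Metric.ball a ε := by
  obtain ⟨k, hk⟩ := exists_nat_one_div_lt (half_pos hε)
  obtain ⟨i, hi⟩ := (TopologicalSpace.denseRange_denseSeq (Rd d)).exists_dist_lt a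
    (Nat.one_div_pos_of_nat (α := ℝ) (n := k))
  refine ⟨Nat.pair i k, ?_, ?_⟩
  · simpa [window] using hi
  · simp only [window, Nat.unpair_pair]
    refine Metric.ball_subset_ball' ?_
    rw [dist_comm]
    linarith

lemma exists_window_eq_one {χ : Kernel Ω (Rd d)} (hχ : IsCov θ χ) {ω : Ω} {s : Set (Rd d)}
    (hs : χ ω = Measure.count.restrict s) {x : Rd d} (hx : x ∈ s) (z : Rd d) :
    ∃ n, χ (θ z ω) (window d n) = 1 ∧ x - z ∈ window d n := by
  set s' := {y | y + z ∈ s} with hs'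
  have h1 : χ (θ z ω) = Measure.count.restrict s' := hχ.count_shift hs z
  have hfin : (Metric.ball (x - z) 1 ∩ s').Finite := by
    obtain ⟨N, hN⟩ := exists_nat_gt (1 + ‖x - z‖)
    rw [← Measure.count_apply_lt_top, ← Measure.restrict_apply Metric.isOpen_ball.measurableSet,
      ← h1]
    refine (measure_mono (Metric.ball_subset_ball' ?_)).trans_lt (hχ.fin _ N)
    rw [dist_zero_right]
    exact hN.le
  have hcl : IsOpen ((Metric.ball (x - z) 1 ∩ s') \ {x - z})ᶜ :=
    (hfin.subset Set.sdiff_subset).isClosed.isOpen_compl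
  obtain ⟨ε, hε, hball⟩ := Metric.isOpen_iff.1 hcl (x - z) (by simp)
  obtain ⟨n, hn, hn'⟩ := exists_window (x - z) (lt_min hε one_pos)
  refine ⟨n, ?_, hn⟩
  rw [h1, Measure.restrict_apply (measurableSet_window n)]
  have : window d n ∩ s' = {x - z} := by
    ext y
    constructor
    · rintro ⟨hy1, hy2⟩
      by_contra hne
      have h2 := hn' hy1
      exact hball (Metric.ball_subset_ball (min_le_left _ _) h2)
        ⟨⟨Metric.ball_subset_ball (min_le_right _ _) h2, hy2⟩, hne⟩
    · rintro rfl
      exact ⟨hn, by simpa [hs'] using hx⟩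
  rw [this, Measure.count_singleton]

/-- Running through all pairs of windows, each stage applied to what the previous ones have left
over, exhausts at least one of the two measures: at any fixed configuration point, every site is
attached to that point through some window. -/
lemma exists_matching (hf : IsMeasurableFlow θ) {ξ η χ : Kernel Ω (Rd d)} (hξ : IsCov θ ξ)
    (hη : IsCov θ η) (hχ : IsCov θ χ) :
    ∃ (D R : Set Ω) (t : Ω → Rd d), MeasurableSet D ∧ MeasurableSet R ∧ Measurable t ∧
      ∀ ω, Good ξ η χ ω →
        (∀ C, MeasurableSet C → ξ ω {z | θ z ω ∈ D ∧ z + t (θ z ω) ∈ C} =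
          η ω {w | θ w ω ∈ R ∧ w ∈ C}) ∧
        (χ ω ≠ 0 → ξ ω {z | θ z ω ∉ D} = 0 ∨ η ω {w | θ w ω ∉ R} = 0) := by
  have stage := fun (n : ℕ) (q : {q : Set Ω × Set Ω // MeasurableSet q.1 ∧ MeasurableSet q.2}) =>
    exists_stage hf hξ hη hχ q.2.1 q.2.2 (measurableSet_window n.unpair.1)
      (measurableSet_window n.unpair.2) (window_bounded n.unpair.1) (window_bounded n.unpair.2)
  choose D R t hD hR ht hDS hRT hmain using stage
  let st : ℕ → {q : Set Ω × Set Ω // MeasurableSet q.1 ∧ MeasurableSet q.2} := fun n =>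
    Nat.rec ⟨(Set.univ, Set.univ), MeasurableSet.univ, MeasurableSet.univ⟩
      (fun n q => ⟨(q.1.1 \ D n q, q.1.2 \ R n q), q.2.1.diff (hD n q), q.2.2.diff (hR n q)⟩) n
  have hS : ∀ n, (st (n + 1)).1.1 = (st n).1.1 \ D n (st n) := fun n => rfl
  have hT : ∀ n, (st (n + 1)).1.2 = (st n).1.2 \ R n (st n) := fun n => rfl
  have hSanti : Antitone fun n => (st n).1.1 :=
    antitone_nat_of_succ_le fun n => by rw [hS]; exact Set.sdiff_subset
  have hTanti : Antitone fun n => (st n).1.2 :=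
    antitone_nat_of_succ_le fun n => by rw [hT]; exact Set.sdiff_subset
  have hDdisj : Pairwise fun i j => Disjoint (D i (st i)) (D j (st j)) := by
    have h : ∀ m n, m < n → Disjoint (D m (st m)) (D n (st n)) := fun m n hmn =>
      Set.disjoint_left.2 fun ω h1 h2 =>
        (hSanti (Nat.succ_le_of_lt hmn) (hDS n _ h2)).2 h1
    intro m n hmn
    rcases lt_or_gt_of_ne hmn with h' | h'
    · exact h m n h'
    · exact (h n m h').symm
  have hRdisj : Pairwise fun i j => Disjoint (R i (st i)) (R j (st j)) := by
    have h : ∀ m n, m < n → Disjoint (R m (st m)) (R n (st n)) := fun m n hmn =>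
      Set.disjoint_left.2 fun ω h1 h2 =>
        (hTanti (Nat.succ_le_of_lt hmn) (hRT n _ h2)).2 h1
    intro m n hmn
    rcases lt_or_gt_of_ne hmn with h' | h'
    · exact h m n h'
    · exact (h n m h').symm
  have hSrem : ∀ n ω, ω ∉ ⋃ n, D n (st n) → ω ∈ (st n).1.1 := by
    intro n ω hω
    induction n with
    | zero => trivial
    | succ n ih => exact ⟨ih, fun h => hω (Set.mem_iUnion.2 ⟨n, h⟩)⟩
  have hTrem : ∀ n ω, ω ∉ ⋃ n, R n (st n) → ω ∈ (st n).1.2 := by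
    intro n ω hω
    induction n with
    | zero => trivial
    | succ n ih => exact ⟨ih, fun h => hω (Set.mem_iUnion.2 ⟨n, h⟩)⟩
  obtain ⟨t', ht', htt'⟩ := exists_measurable_piecewise (fun n => D n (st n))
    (fun n => hD n _) (fun n => t n (st n)) (fun n => ht n _) (fun i j hij => by
      beta_reduce
      rw [(hDdisj hij).inter_eq]; exact Set.eqOn_empty _ _)
  refine ⟨⋃ n, D n (st n), ⋃ n, R n (st n), t', MeasurableSet.iUnion fun n => hD n _,
    MeasurableSet.iUnion fun n => hR n _, ht', fun ω hω => ⟨fun C hC => ?_, fun hne => ?_⟩⟩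
  · have hθω := hf.measurable_left ω
    have e1 : {z | θ z ω ∈ ⋃ n, D n (st n) ∧ z + t' (θ z ω) ∈ C} =
        ⋃ n, {z | θ z ω ∈ D n (st n) ∧ z + t n (st n) (θ z ω) ∈ C} := by
      ext z
      simp only [Set.mem_iUnion, Set.mem_ofPred_eq]
      constructor
      · rintro ⟨⟨n, hn⟩, h⟩
        exact ⟨n, hn, by rwa [← htt' n hn]⟩
      · rintro ⟨n, hn, h⟩
        exact ⟨⟨n, hn⟩, by rwa [htt' n hn]⟩
    have e2 : {w | θ w ω ∈ ⋃ n, R n (st n) ∧ w ∈ C} = ⋃ n, {w | θ w ω ∈ R n (st n) ∧ w ∈ C} := by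
      ext z
      simp only [Set.mem_iUnion, Set.mem_ofPred_eq]
      tauto
    rw [e1, e2, measure_iUnion, measure_iUnion]
    · exact tsum_congr fun n => (hmain n (st n) ω hω).1 C hC
    · intro i j hij
      exact Set.disjoint_left.2 fun z h1 h2 => Set.disjoint_left.1 (hRdisj hij) h1.1 h2.1
    · exact fun n => (hθω (hR n _)).inter hC
    · intro i j hij
      exact Set.disjoint_left.2 fun z h1 h2 => Set.disjoint_left.1 (hDdisj hij) h1.1 h2.1
    · exact fun n => (hθω (hD n _)).inter ((measurable_id.add ((ht n _).comp hθω)) hC)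
  · obtain ⟨s, hs⟩ := hω.1
    have hsne : s.Nonempty := by
      by_contra h
      rw [Set.not_nonempty_iff_eq_empty] at h
      apply hne
      rw [hs, h, Measure.restrict_empty]
    obtain ⟨x, hx⟩ := hsne
    have hχx : χ ω {x} ≠ 0 := by
      rw [hs, Measure.restrict_apply (measurableSet_singleton x),
        Set.inter_eq_left.2 (Set.singleton_subset_iff.2 hx), Measure.count_singleton]
      exact one_ne_zero
    by_contra! hcon
    obtain ⟨h1, h2⟩ := hcon
    have c1 : ∃ n, ξ ω {z | θ z ω ∉ ⋃ n, D n (st n) ∧ χ (θ z ω) (window d n) = 1 ∧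
        x - z ∈ window d n} ≠ 0 := by
      by_contra! h
      refine h1 (measure_mono_null ?_ (measure_iUnion_null h))
      intro z hz
      obtain ⟨n, hn⟩ := exists_window_eq_one hχ hs hx z
      exact Set.mem_iUnion.2 ⟨n, hz, hn⟩
    have c2 : ∃ n, η ω {z | θ z ω ∉ ⋃ n, R n (st n) ∧ χ (θ z ω) (window d n) = 1 ∧
        x - z ∈ window d n} ≠ 0 := by
      by_contra! h
      refine h2 (measure_mono_null ?_ (measure_iUnion_null h))
      intro z hz
      obtain ⟨n, hn⟩ := exists_window_eq_one hχ hs hx z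
      exact Set.mem_iUnion.2 ⟨n, hz, hn⟩
    obtain ⟨n, hn⟩ := c1
    obtain ⟨m, hm⟩ := c2
    have h3 := (hmain (Nat.pair n m) (st (Nat.pair n m)) ω hω).2 x hχx
    simp only [Nat.unpair_pair] at h3
    rcases h3 with h | h
    · refine hn (measure_mono_null ?_ h)
      exact fun z hz => ⟨⟨hSrem _ _ hz.1, fun h => hz.1 (Set.mem_iUnion.2 ⟨_, h⟩)⟩, hz.2⟩
    · refine hm (measure_mono_null ?_ h)
      exact fun z hz => ⟨⟨hTrem _ _ hz.1, fun h => hz.1 (Set.mem_iUnion.2 ⟨_, h⟩)⟩, hz.2⟩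

end Gluing

/-! ### Mass transport -/

section MassTransport

open ProbabilityTheory Filter

variable {d : ℕ} {Ω : Type*} [MeasurableSpace Ω] {θ : Rd d → Ω → Ω}

lemma measurableSet_unitCube : MeasurableSet (unitCube d) := by
  have : unitCube d = ⋂ i, (fun x : Rd d => x i) ⁻¹' Set.Icc (0 : ℝ) 1 := by
    ext x; simp [unitCube]
  rw [this]
  exact MeasurableSet.iInter fun i => (by fun_prop : Measurable fun x : Rd d => x i)
    measurableSet_Icc

lemma volume_unitCube : volume (unitCube d) = 1 := by
  have : unitCube d = WithLp.ofLp ⁻¹' Set.Icc (0 : Fin d → ℝ) 1 := by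
    ext x
    simp [unitCube, Set.mem_Icc, Pi.le_def, forall_and]
  rw [this, (PiLp.volume_preserving_ofLp (Fin d)).measure_preimage
    measurableSet_Icc.nullMeasurableSet, Real.volume_Icc_pi]
  simp

/-- Stationarity: the expected mass seen from a moving origin does not depend on the origin. -/
lemma lintegral_shift (hf : IsMeasurableFlow θ) {P : Measure Ω} (hstat : IsStationary P θ)
    {κ : Kernel Ω (Rd d)} (hκ : IsCov θ κ) {E : Set (Ω × Rd d)} (hE : MeasurableSet E)
    (y : Rd d) :
    ∫⁻ ω, κ ω {z | (θ z ω, z - y) ∈ E} ∂P = ∫⁻ ω, κ ω {z | (θ z ω, z) ∈ E} ∂P := by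
  have := isSFiniteKernel_of_ball κ hκ.fin
  have hmp : MeasurePreserving (θ y) P P := ⟨hf.measurable_right y, hstat y⟩
  have hm : MeasurableSet {q : Ω × Rd d | (θ q.2 q.1, q.2) ∈ E} :=
    ((hf.measurable.comp measurable_swap).prodMk measurable_snd) hE
  have hmeas : Measurable fun ω => κ ω {z | (θ z ω, z) ∈ E} :=
    Kernel.measurable_kernel_prodMk_left hm
  rw [← hmp.lintegral_comp hmeas]
  refine lintegral_congr fun ω => ?_
  rw [hκ.apply]
  simp only [Set.mem_ofPred_eq, hf.apply_apply, sub_add_cancel]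

lemma lintegral_section {Q : Type*} [MeasurableSpace Q] (M : Measure Q) [SFinite M] {E : Set Q}
    (hE : MeasurableSet E) {F : Set (Q × Rd d)} (hF : MeasurableSet F)
    (hv : ∀ q, volume {y | (q, y) ∈ F} = 1) :
    ∫⁻ y, M {q | q ∈ E ∧ (q, y) ∈ F} = M E := by
  have hG : MeasurableSet (Prod.fst ⁻¹' E ∩ F) := (measurable_fst hE).inter hF
  have h1 := Measure.prod_apply (μ := M) (ν := (volume : Measure (Rd d))) hG
  have h2 := Measure.prod_apply_symm (μ := M) (ν := (volume : Measure (Rd d))) hG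
  have h3 : ∀ q, volume (Prod.mk q ⁻¹' (Prod.fst ⁻¹' E ∩ F) : Set (Rd d)) = E.indicator 1 q := by
    intro q
    by_cases hq : q ∈ E
    · rw [Set.indicator_of_mem hq, Pi.one_apply, ← hv q]
      congr 1
      ext y
      simp [hq]
    · rw [Set.indicator_of_notMem hq]
      have : (Prod.mk q ⁻¹' (Prod.fst ⁻¹' E ∩ F) : Set (Rd d)) = ∅ := by
        ext y
        simp [hq]
      rw [this, measure_empty]
  simp_rw [h3] at h1
  rw [lintegral_indicator_one hE] at h1
  exact h2.symm.trans h1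

/-- Mass transport principle: displacing the part `D` of a stationary random measure by a covariant
displacement `t` does not change the expected mass of the unit cube. -/
lemma mass_transport (hf : IsMeasurableFlow θ) {P : Measure Ω} [IsProbabilityMeasure P]
    (hstat : IsStationary P θ) {κ : Kernel Ω (Rd d)} (hκ : IsCov θ κ) {D : Set Ω}
    (hD : MeasurableSet D) {t : Ω → Rd d} (ht : Measurable t) :
    ∫⁻ ω, κ ω {z | θ z ω ∈ D ∧ z ∈ unitCube d} ∂P =
      ∫⁻ ω, κ ω {z | θ z ω ∈ D ∧ z + t (θ z ω) ∈ unitCube d} ∂P := by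
  have := isSFiniteKernel_of_ball κ hκ.fin
  have hB := measurableSet_unitCube (d := d)
  have hθs : Measurable fun q : Ω × Rd d => θ q.2 q.1 := hf.measurable.comp measurable_swap
  have hdst : Measurable fun q : Ω × Rd d => q.2 + t (θ q.2 q.1) :=
    measurable_snd.add (ht.comp hθs)
  have hE₁ : MeasurableSet {q : Ω × Rd d | θ q.2 q.1 ∈ D ∧ q.2 ∈ unitCube d} :=
    (hθs hD).inter (measurable_snd hB)
  have hE₂ : MeasurableSet {q : Ω × Rd d | θ q.2 q.1 ∈ D ∧ q.2 + t (θ q.2 q.1) ∈ unitCube d} :=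
    (hθs hD).inter (hdst hB)
  have hF₁ : MeasurableSet {r : (Ω × Rd d) × Rd d |
      r.1.2 + t (θ r.1.2 r.1.1) - r.2 ∈ unitCube d} :=
    ((hdst.comp measurable_fst).sub measurable_snd) hB
  have hF₂ : MeasurableSet {r : (Ω × Rd d) × Rd d | r.1.2 + r.2 ∈ unitCube d} :=
    ((measurable_snd.comp measurable_fst).add measurable_snd) hB
  have h1 := lintegral_section (P ⊗ₘ κ) hE₁ hF₁ (fun q => by
    rw [← volume_unitCube (d := d)]
    exact (Measure.measurePreserving_sub_left volume (q.2 + t (θ q.2 q.1))).measure_preimage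
      hB.nullMeasurableSet)
  have h2 := lintegral_section (P ⊗ₘ κ) hE₂ hF₂ (fun q => by
    rw [← volume_unitCube (d := d)]
    exact measure_preimage_add volume q.2 (unitCube d))
  rw [Measure.compProd_apply hE₁] at h1
  rw [Measure.compProd_apply hE₂] at h2
  refine h1.symm.trans (Eq.trans (lintegral_congr fun y => ?_) h2)
  have hE : MeasurableSet {q : Ω × Rd d | q.1 ∈ D ∧ q.2 + y ∈ unitCube d ∧
      q.2 + t q.1 ∈ unitCube d} :=
    (measurable_fst hD).inter (((measurable_snd.add_const y) hB).inter
      ((measurable_snd.add (ht.comp measurable_fst)) hB))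
  have h3 := lintegral_shift hf hstat hκ hE y
  refine (Measure.compProd_apply (hE₁.inter (measurable_prodMk_right hF₁))).trans (Eq.trans ?_
    (Measure.compProd_apply (hE₂.inter (measurable_prodMk_right hF₂))).symm)
  convert h3 using 3 with ω ω
  · congr 1
    ext z
    simp only [Set.mem_preimage, Set.mem_inter_iff, Set.mem_ofPred_eq, sub_add_cancel,
      sub_add_eq_add_sub]
    tauto
  · congr 1
    ext z
    simp only [Set.mem_preimage, Set.mem_inter_iff, Set.mem_ofPred_eq]
    tauto

/-- A part of a stationary random measure without mass in the unit cube has no mass at all. -/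
lemma ae_eq_zero_of_unitCube (hf : IsMeasurableFlow θ) {P : Measure Ω} (hstat : IsStationary P θ)
    {κ : Kernel Ω (Rd d)} (hκ : IsCov θ κ) {D : Set Ω} (hD : MeasurableSet D)
    (h : ∫⁻ ω, κ ω {z | θ z ω ∈ D ∧ z ∈ unitCube d} ∂P = 0) :
    ∀ᵐ ω ∂P, κ ω {z | θ z ω ∈ D} = 0 := by
  have := isSFiniteKernel_of_ball κ hκ.fin
  have hB := measurableSet_unitCube (d := d)
  have hθs : Measurable fun q : Ω × Rd d => θ q.2 q.1 := hf.measurable.comp measurable_swap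
  let v : (Fin d → ℤ) → Rd d := fun k => WithLp.toLp 2 fun i => (k i : ℝ)
  have hk : ∀ k : Fin d → ℤ, ∀ᵐ ω ∂P, κ ω {z | θ z ω ∈ D ∧ z - v k ∈ unitCube d} = 0 := by
    intro k
    have h1 := lintegral_shift hf hstat hκ (hD.prod hB) (v k)
    have h2 : ∫⁻ ω, κ ω {z | θ z ω ∈ D ∧ z - v k ∈ unitCube d} ∂P = 0 := h1.trans h
    have hm : MeasurableSet {q : Ω × Rd d | θ q.2 q.1 ∈ D ∧ q.2 - v k ∈ unitCube d} :=
      (hθs hD).inter ((measurable_snd.sub_const _) hB)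
    exact (lintegral_eq_zero_iff (Kernel.measurable_kernel_prodMk_left (κ := κ) hm)).1 h2
  filter_upwards [ae_all_iff.2 hk] with ω hω
  refine measure_mono_null ?_ (measure_iUnion_null hω)
  intro z hz
  refine Set.mem_iUnion.2 ⟨fun i => ⌊z i⌋, hz, fun i => ?_⟩
  change z i - (⌊z i⌋ : ℝ) ∈ Set.Icc (0 : ℝ) 1
  exact ⟨Int.fract_nonneg _, (Int.fract_lt_one _).le⟩

end MassTransport

/-! ### Existence of the balancing allocation -/

open ProbabilityTheory Filter

/-- **Proposition (diffuse destination).** Let `ξ` and `η` be jointly stationary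
and ergodic random measures on `ℝ^d` with `0 < λ_ξ = λ_η < ∞`, both diffuse, and
suppose there exists an auxiliary simple point process `χ` (non-zero, jointly
stationary and ergodic with `ξ` and `η`, with finite intensity). Then there
exists an allocation balancing `ξ` and `η`. -/
theorem exists_balancing_allocation_of_diffuse_destination
    {d : ℕ} {Ω : Type*} [MeasurableSpace Ω] (P : Measure Ω) [IsProbabilityMeasure P]
    (θ : Rd d → Ω → Ω) (ξ η : Ω → Measure (Rd d))
    (hflow : IsMeasurableFlow θ) (hstat : IsStationary P θ) (herg : IsErgodicFlow P θ)
    (hξ : IsRandomMeasure P ξ) (hη : IsRandomMeasure P η)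
    (hξinv : IsFlowInvariant P θ ξ) (hηinv : IsFlowInvariant P θ η)
    (hξdiff : IsDiffuseRM P ξ) (hηdiff : IsDiffuseRM P η)
    (hpos : 0 < intensity P ξ) (heq : intensity P ξ = intensity P η)
    (hfin : intensity P η < ∞)
    (χ : Ω → Measure (Rd d))
    (hχ : IsRandomMeasure P χ) (hχinv : IsFlowInvariant P θ χ)
    (hχsimple : IsSimplePointProcess P χ) (hχne : ∀ᵐ ω ∂P, χ ω ≠ 0)
    (hχfin : intensity P χ < ∞) :
    ∃ τ : Ω → Rd d → Option (Rd d), IsAllocation P θ τ ∧ Balances P ξ η τ := by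
  classical
  obtain ⟨κξ, fξ, cξ, aξ⟩ := exists_covariant_version P θ hflow hstat ξ hξ hξinv
  obtain ⟨κη, fη, cη, aη⟩ := exists_covariant_version P θ hflow hstat η hη hηinv
  obtain ⟨κχ, fχ, cχ, aχ⟩ := exists_covariant_version P θ hflow hstat χ hχ hχinv
  have hκξ : IsCov θ κξ := ⟨fξ, cξ⟩
  have hκη : IsCov θ κη := ⟨fη, cη⟩
  have hκχ : IsCov θ κχ := ⟨fχ, cχ⟩
  have sξ := isSFiniteKernel_of_ball κξ fξ
  have sη := isSFiniteKernel_of_ball κη fη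
  have hgood : ∀ᵐ ω ∂P, Good κξ κη κχ ω ∧ κχ ω ≠ 0 := by
    filter_upwards [aξ, aη, aχ, hξdiff, hηdiff, hχsimple, hχne] with ω h1 h2 h3 h4 h5 h6 h7
    obtain ⟨s, -, hs⟩ := h6
    exact ⟨⟨⟨s, h3.trans hs⟩, by rwa [h1], by rwa [h2]⟩, by rwa [h3]⟩
  obtain ⟨D, R, t, hD, hR, ht, hmain⟩ := exists_matching hflow hκξ hκη hκχ
  have hB := measurableSet_unitCube (d := d)
  have hθs : Measurable fun q : Ω × Rd d => θ q.2 q.1 := hflow.measurable.comp measurable_swap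
  -- Inside the cube, the matched parts of `ξ` and `η` have the same expected mass.
  have hmass : ∫⁻ ω, κξ ω {z | θ z ω ∈ D ∧ z ∈ unitCube d} ∂P =
      ∫⁻ ω, κη ω {z | θ z ω ∈ R ∧ z ∈ unitCube d} ∂P := by
    rw [mass_transport hflow hstat hκξ hD ht]
    refine lintegral_congr_ae ?_
    filter_upwards [hgood] with ω hω
    exact (hmain ω hω.1).1 _ hB
  have hsplit : ∀ (κ : Kernel Ω (Rd d)) [IsSFiniteKernel κ] (ζ : Ω → Measure (Rd d)),
      (∀ᵐ ω ∂P, κ ω = ζ ω) → ∀ D : Set Ω, MeasurableSet D →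
      intensity P ζ = ∫⁻ ω, κ ω {z | θ z ω ∈ D ∧ z ∈ unitCube d} ∂P +
        ∫⁻ ω, κ ω {z | θ z ω ∈ Dᶜ ∧ z ∈ unitCube d} ∂P := by
    intro κ _ ζ hζ D hD
    have hm : MeasurableSet {q : Ω × Rd d | θ q.2 q.1 ∈ D ∧ q.2 ∈ unitCube d} :=
      (hθs hD).inter (measurable_snd hB)
    have hmeas : Measurable fun ω => κ ω {z | θ z ω ∈ D ∧ z ∈ unitCube d} :=
      Kernel.measurable_kernel_prodMk_left hm
    rw [← lintegral_add_left hmeas]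
    refine lintegral_congr_ae ?_
    filter_upwards [hζ] with ω hω
    rw [← hω, ← measure_inter_add_sdiff (unitCube d) ((hflow.measurable_left ω) hD)]
    congr 2
    · ext z
      exact and_comm
    · ext z
      exact and_comm
  have hrem : ∫⁻ ω, κξ ω {z | θ z ω ∈ Dᶜ ∧ z ∈ unitCube d} ∂P =
      ∫⁻ ω, κη ω {z | θ z ω ∈ Rᶜ ∧ z ∈ unitCube d} ∂P := by
    have h1 := hsplit κξ ξ aξ D hD
    have h2 := hsplit κη η aη R hR
    have h3 := heq
    rw [h1, h2, hmass] at h3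
    rw [h2] at hfin
    exact (ENNReal.add_right_inj (ne_top_of_le_ne_top hfin.ne le_self_add)).1 h3
  -- The exhaustion of a measure is an invariant event.
  have hzero : ∀ (κ : Kernel Ω (Rd d)), IsCov θ κ → ∀ D : Set Ω, MeasurableSet D →
      P {ω | κ ω {z | θ z ω ∈ Dᶜ} = 0} = 0 ∨ P {ω | κ ω {z | θ z ω ∈ Dᶜ} = 0} = 1 := by
    intro κ hκ D hD
    have := isSFiniteKernel_of_ball κ hκ.fin
    refine herg _ ?_ fun x => ?_
    · have hm : MeasurableSet {q : Ω × Rd d | θ q.2 q.1 ∈ Dᶜ} := hθs hD.compl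
      exact (Kernel.measurable_kernel_prodMk_left (κ := κ) hm) (measurableSet_singleton 0)
    · ext ω
      simp only [Set.mem_preimage, Set.mem_ofPred_eq, hκ.apply, hflow.apply_apply, sub_add_cancel]
  have hcube : ∀ (κ : Kernel Ω (Rd d)) (D : Set Ω), (∀ᵐ ω ∂P, κ ω {z | θ z ω ∈ Dᶜ} = 0) →
      ∫⁻ ω, κ ω {z | θ z ω ∈ Dᶜ ∧ z ∈ unitCube d} ∂P = 0 := by
    intro κ D h
    rw [← lintegral_zero (μ := P)]
    refine lintegral_congr_ae ?_
    filter_upwards [h] with ω hω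
    exact measure_mono_null (fun z hz => hz.1) hω
  have hone : (∀ᵐ ω ∂P, κξ ω {z | θ z ω ∈ Dᶜ} = 0) ∨ ∀ᵐ ω ∂P, κη ω {z | θ z ω ∈ Rᶜ} = 0 := by
    have hm : ∀ (κ : Kernel Ω (Rd d)) [IsSFiniteKernel κ] (D : Set Ω), MeasurableSet D →
        MeasurableSet {ω | κ ω {z | θ z ω ∈ Dᶜ} = 0} := fun κ _ D hD =>
      (Kernel.measurable_kernel_prodMk_left (κ := κ)
        (show MeasurableSet {q : Ω × Rd d | θ q.2 q.1 ∈ Dᶜ} from hθs hD.compl))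
        (measurableSet_singleton 0)
    rcases hzero κξ hκξ D hD with h1 | h1
    · right
      have h1' : ∀ᵐ ω ∂P, ¬ κξ ω {z | θ z ω ∈ Dᶜ} = 0 := by
        rw [ae_iff]; simpa using h1
      filter_upwards [hgood, h1'] with ω hω h2
      exact ((hmain ω hω.1).2 hω.2).resolve_left h2
    · left
      exact (mem_ae_iff_prob_eq_one (hm κξ D hD)).2 h1
  have hboth : (∀ᵐ ω ∂P, κξ ω {z | θ z ω ∈ Dᶜ} = 0) ∧ ∀ᵐ ω ∂P, κη ω {z | θ z ω ∈ Rᶜ} = 0 := by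
    rcases hone with h | h
    · exact ⟨h, ae_eq_zero_of_unitCube hflow hstat hκη hR.compl (hrem.symm.trans (hcube κξ D h))⟩
    · exact ⟨ae_eq_zero_of_unitCube hflow hstat hκξ hD.compl (hrem.trans (hcube κη R h)), h⟩
  refine ⟨fun ω z => if θ z ω ∈ D then some (z + t (θ z ω)) else none, ⟨?_, ?_⟩, ?_⟩
  · have hsome : Measurable (some : Rd d → Option (Rd d)) := fun s hs => hs
    exact Measurable.ite (hθs hD) (hsome.comp (measurable_snd.add (ht.comp hθs))) measurable_const
  · refine Eventually.of_forall fun ω x y => ?_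
    simp only [hflow.apply_apply, sub_add_cancel]
    split_ifs
    · simp [sub_add_eq_add_sub]
    · rfl
  · filter_upwards [hgood, hboth.1, hboth.2, aξ, aη] with ω hω h1 h2 h3 h4
    rw [← h3, ← h4]
    refine ⟨?_, fun C hC => ?_⟩
    · convert h1 using 2
      ext z
      simp
    · have e : {z | ∃ y ∈ C, (if θ z ω ∈ D then some (z + t (θ z ω)) else none) = some y} =
          {z | θ z ω ∈ D ∧ z + t (θ z ω) ∈ C} := by
        ext z
        by_cases hz : θ z ω ∈ D <;> simp [hz]
      rw [e, (hmain ω hω.1).1 C hC]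
      refine measure_congr ?_
      have h2' : ∀ᵐ w ∂(κη ω), θ w ω ∈ R := by
        rw [ae_iff]; exact h2
      filter_upwards [h2'] with w hw
      exact propext ⟨fun h => h.2, fun h => ⟨hw, h⟩⟩

end Paper
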